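/- Let n ≥ 1 be a natural number, let α ∈ (4n−1, 4n+1), set ν = (1−α)/2, and let λ satisfy 0 < λ < j_{ν,1}². Then for all real numbers r, s with 0 < r ≤ s ≤ 1, r^ν · (J_{−ν}(s·√λ)·J_ν(r·√λ) − J_ν(s·√λ)·J_{−ν}(r·√λ)) ≤ 0. -/

import Mathlib

/-- The Bessel function of the first kind of real order `μ`. -/
noncomputable def besselJ (μ x : ℝ) : ℝ :=
  ∑' m : ℕ, ((-1 : ℝ) ^ m / ((m.factorial : ℝ) * Real.Gamma ((m : ℝ) + μ + 1))) *
    (x / 2) ^ (2 * (m : ℝ) + μ)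

namespace BesselAux

def Ent (c : ℕ → ℝ) : Prop := ∀ R : ℝ, 0 ≤ R → Summable (fun m => |c m| * R ^ m)

noncomputable def S (c : ℕ → ℝ) (z : ℝ) : ℝ := ∑' m, c m * z ^ m

def D (c : ℕ → ℝ) : ℕ → ℝ := fun m => ((m : ℝ) + 1) * c (m + 1)

lemma Ent.summable {c : ℕ → ℝ} (h : Ent c) (z : ℝ) : Summable (fun m => c m * z ^ m) := by
  apply Summable.of_norm
  have := h |z| (abs_nonneg z)
  simpa [abs_mul, abs_pow] using this

lemma Ent.D {c : ℕ → ℝ} (h : Ent c) : Ent (D c) := by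
  intro R hR
  have h1 := (summable_nat_add_iff 1).2 (h (2 * (R + 1)) (by positivity))
  refine Summable.of_nonneg_of_le (fun m => by positivity) (fun m => ?_) h1
  have h2 : ((m : ℝ) + 1) ≤ 2 ^ (m + 1) := by
    have := (Nat.lt_two_pow_self (n := m + 1)).le
    exact_mod_cast this
  have h3 : R ^ m ≤ (R + 1) ^ (m + 1) := by
    calc R ^ m ≤ (R + 1) ^ m := by gcongr; linarith
      _ ≤ (R + 1) ^ (m + 1) := pow_le_pow_right₀ (by linarith) (by omega)
  have h4 : |BesselAux.D c m| = ((m : ℝ) + 1) * |c (m + 1)| := by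
    rw [BesselAux.D, abs_mul, abs_of_nonneg (by positivity)]
  rw [h4, mul_pow]
  calc ((m : ℝ) + 1) * |c (m + 1)| * R ^ m ≤ 2 ^ (m + 1) * |c (m + 1)| * (R + 1) ^ (m + 1) := by
        gcongr
    _ = _ := by ring

lemma S_hasDerivAt {c : ℕ → ℝ} (h : Ent c) (z : ℝ) : HasDerivAt (S c) (S (D c) z) z := by
  set R := |z| + 1 with hR
  have hR0 : 0 ≤ R := by positivity
  have hu : Summable (fun m : ℕ => |c m| * (m * R ^ (m - 1))) := by
    apply (summable_nat_add_iff 1).1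
    refine (h.D R hR0).congr (fun m => ?_)
    rw [BesselAux.D, abs_mul, abs_of_nonneg (by positivity)]
    simp only [Nat.add_sub_cancel]
    push_cast
    ring
  have key := hasDerivAt_tsum_of_isPreconnected (g := fun m z => c m * z ^ m)
    (g' := fun m z => c m * (m * z ^ (m - 1))) (t := Metric.ball 0 R) (y₀ := 0) (y := z)
    hu Metric.isOpen_ball (convex_ball 0 R).isPreconnected
    (fun m y _ => (hasDerivAt_pow m y).const_mul (c m)) (fun m y hy => ?_)
    (by simp [R]; positivity) (h.summable 0) (by simp [R])
  · have e : ∑' m, c m * (m * z ^ (m - 1)) = S (D c) z := by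
      rw [S]
      have hs : Summable (fun m : ℕ => c m * (m * z ^ (m - 1))) := by
        apply (summable_nat_add_iff 1).1
        refine (h.D.summable z).congr (fun m => ?_)
        rw [BesselAux.D]
        simp only [Nat.add_sub_cancel]
        push_cast
        ring
      rw [hs.tsum_eq_zero_add]
      simp
      apply tsum_congr
      intro m
      rw [BesselAux.D]; ring
    rw [← e]
    exact key
  · have hy' : |y| ≤ R := by
      have := mem_ball_zero_iff.1 hy
      exact this.le
    rw [Real.norm_eq_abs, abs_mul, abs_mul, abs_pow, Nat.abs_cast]
    gcongr

noncomputable def A (μ : ℝ) (m : ℕ) : ℝ :=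
  (-1 : ℝ) ^ m / ((m.factorial : ℝ) * Real.Gamma ((m : ℝ) + μ + 1))

lemma A_rec {μ : ℝ} (hμ : ∀ m : ℤ, μ ≠ m) (m : ℕ) :
    ((m : ℝ) + 1) * ((m : ℝ) + 1 + μ) * A μ (m + 1) = - A μ m := by
  have h1 : (m : ℝ) + μ + 1 ≠ 0 := by
    intro h
    apply hμ (-(m + 1 : ℤ))
    push_cast; linarith
  have h2 : Real.Gamma ((m : ℝ) + μ + 1) ≠ 0 := by
    apply Real.Gamma_ne_zero
    intro k hk
    apply hμ (-(k : ℤ) - m - 1)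
    push_cast; linarith
  have h3 : ((m + 1 : ℕ) : ℝ) + μ + 1 = ((m : ℝ) + μ + 1) + 1 := by push_cast; ring
  rw [A, A, h3, Real.Gamma_add_one h1, Nat.factorial_succ]
  have h4 : (m.factorial : ℝ) ≠ 0 := by positivity
  push_cast
  field_simp
  ring

lemma A_ent {μ : ℝ} (hμ : ∀ m : ℤ, μ ≠ m) : Ent (A μ) := by
  intro R hR
  apply summable_of_ratio_norm_eventually_le (r := 1 / 2) (by norm_num)
  obtain ⟨N, hN⟩ := exists_nat_ge (|μ| + 2 * R)
  filter_upwards [Filter.eventually_ge_atTop N] with m hm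
  have hm' : (N : ℝ) ≤ m := by exact_mod_cast hm
  have hmu := neg_abs_le μ
  have hmu0 := abs_nonneg μ
  have h1 : 1 ≤ (m : ℝ) + 1 + μ := by linarith
  have h2 : 2 * R ≤ (m : ℝ) + 1 := by linarith
  have h3 : |A μ m| = ((m : ℝ) + 1) * ((m : ℝ) + 1 + μ) * |A μ (m + 1)| := by
    rw [← abs_neg, ← A_rec hμ m, abs_mul, abs_of_nonneg (by positivity)]
  have h5 : 2 * R * |A μ (m+1)| ≤ |A μ m| := by
    rw [h3]
    have : 2 * R ≤ ((m : ℝ) + 1) * ((m : ℝ) + 1 + μ) := by nlinarith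
    gcongr
  rw [Real.norm_eq_abs, Real.norm_eq_abs, abs_mul, abs_mul, abs_abs, abs_abs,
    abs_of_nonneg (pow_nonneg hR _), abs_of_nonneg (pow_nonneg hR _), pow_succ]
  have h6 : 0 ≤ R ^ m := by positivity
  nlinarith

lemma ode {μ : ℝ} (hμ : ∀ m : ℤ, μ ≠ m) (z : ℝ) :
    z * S (D (D (A μ))) z + (μ + 1) * S (D (A μ)) z + S (A μ) z = 0 := by
  have e := A_ent hμ
  have s0 := e.summable z
  have s1 := e.D.summable z
  have s2 := e.D.D.summable z
  have t : Summable (fun m : ℕ => (m : ℝ) * D (A μ) m * z ^ m) := by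
    apply (summable_nat_add_iff 1).1
    refine (s2.mul_left z).congr (fun m => ?_)
    rw [D]; push_cast; ring
  have h2 : z * S (D (D (A μ))) z = ∑' m : ℕ, (m : ℝ) * D (A μ) m * z ^ m := by
    rw [t.tsum_eq_zero_add, S, ← tsum_mul_left]
    simp
    apply tsum_congr
    intro m
    rw [D]; ring
  rw [h2, S, S, ← tsum_mul_left, ← t.tsum_add (s1.mul_left _),
    ← (t.add (s1.mul_left _)).tsum_add s0]
  rw [← tsum_zero (β := ℕ)]
  apply tsum_congr
  intro m
  have := A_rec hμ m
  rw [D]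
  linear_combination z ^ m * this

lemma S_zero (c : ℕ → ℝ) : S c 0 = c 0 := by
  rw [S, tsum_eq_single 0]
  · simp
  · intro m hm; simp [hm]

lemma wronsk {ν : ℝ} (h1 : ∀ m : ℤ, ν ≠ m) (h2 : ∀ m : ℤ, -ν ≠ m) (z : ℝ) :
    -ν * (S (A ν) z * S (A (-ν)) z) + z * (S (A ν) z * S (D (A (-ν))) z
      - S (D (A ν)) z * S (A (-ν)) z) = -ν * (A ν 0 * A (-ν) 0) := by
  have d (x : ℝ) : HasDerivAt (fun z => -ν * (S (A ν) z * S (A (-ν)) z) +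
      z * (S (A ν) z * S (D (A (-ν))) z - S (D (A ν)) z * S (A (-ν)) z)) 0 x := by
    have f0 := S_hasDerivAt (A_ent h1) x
    have f1 := S_hasDerivAt (A_ent h1).D x
    have g0 := S_hasDerivAt (A_ent h2) x
    have g1 := S_hasDerivAt (A_ent h2).D x
    have := ((f0.mul g0).const_mul (-ν)).add
      ((hasDerivAt_id x).mul ((f0.mul g1).sub (f1.mul g0)))
    refine this.congr_deriv ?_
    have o1 := ode h1 x
    have o2 := ode h2 x
    simp
    linear_combination S (A ν) x * o2 - S (A (-ν)) x * o1
  have := is_const_of_deriv_eq_zero (fun x => (d x).differentiableAt) (fun x => (d x).deriv) z 0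
  simp only [S_zero] at this
  rw [this]; ring

lemma besselJ_eq (μ x : ℝ) (hx : 0 < x) : besselJ μ x = (x / 2) ^ μ * S (A μ) ((x / 2) ^ 2) := by
  rw [besselJ, S, ← tsum_mul_left]
  apply tsum_congr
  intro m
  rw [A, Real.rpow_add (by positivity), ← pow_mul]
  have : (x / 2) ^ (2 * (m : ℝ)) = (x / 2) ^ (2 * m) := by
    rw [← Real.rpow_natCast]; push_cast; rfl
  rw [this]; ring

end BesselAux

open BesselAux in
/-- **Lemma 3.2 (reverse-ordered case).** For `α ∈ (4n−1, 4n+1)`, `ν = (1−α)/2` and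
`0 < λ < j²_{ν,1}`, one has
`r^ν·(J_{−ν}(s√λ)·J_ν(r√λ) − J_ν(s√λ)·J_{−ν}(r√λ)) ≤ 0` for `0 < r ≤ s ≤ 1`. -/
theorem besselJ_combination_nonpos (n : ℕ) (hn : 1 ≤ n) (α lam ν : ℝ)
    (hα1 : 4 * (n : ℝ) - 1 < α) (hα2 : α < 4 * (n : ℝ) + 1)
    (hν : ν = (1 - α) / 2)
    (hlam : 0 < lam)
    (hzero : ∀ t : ℝ, 0 < t → t ≤ Real.sqrt lam → besselJ ν t ≠ 0) :
    ∀ r s : ℝ, 0 < r → r ≤ s → s ≤ 1 →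
      r ^ ν * (besselJ (-ν) (s * Real.sqrt lam) * besselJ ν (r * Real.sqrt lam)
        - besselJ ν (s * Real.sqrt lam) * besselJ (-ν) (r * Real.sqrt lam)) ≤ 0 := by
  intro r s hr hrs hs
  have hn' : (1 : ℝ) ≤ n := by exact_mod_cast hn
  have l1 : -2 * (n : ℝ) < ν := by linarith
  have l2 : ν < 1 - 2 * (n : ℝ) := by linarith
  have i1 : ∀ m : ℤ, ν ≠ m := by
    rintro m rfl
    have a : -2 * (n : ℤ) < m := by exact_mod_cast l1
    have b : m < 1 - 2 * (n : ℤ) := by exact_mod_cast l2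
    omega
  have i2 : ∀ m : ℤ, -ν ≠ m := by
    intro m h
    apply i1 (-m)
    push_cast; linarith
  have hk : 0 < Real.sqrt lam := Real.sqrt_pos.2 hlam
  set k := Real.sqrt lam with hkdef
  -- sign of the Wronskian
  have hG : Real.Gamma (ν + 1) < 0 := by
    have h := Real.Gamma_mul_Gamma_one_sub (-ν)
    have hs : Real.sin (Real.pi * (-ν)) < 0 := by
      have : Real.sin (Real.pi * (-ν)) = Real.sin (Real.pi * (-ν) - n * (2 * Real.pi)) := by
        rw [Real.sin_sub_nat_mul_two_pi]
      rw [this]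
      apply Real.sin_neg_of_neg_of_neg_pi_lt
      · nlinarith [Real.pi_pos]
      · nlinarith [Real.pi_pos]
    have hp : 0 < Real.Gamma (-ν) := Real.Gamma_pos_of_pos (by linarith)
    have hneg : Real.Gamma (-ν) * Real.Gamma (1 - -ν) < 0 := by
      rw [h]; exact div_neg_of_pos_of_neg Real.pi_pos hs
    have e : ν + 1 = 1 - -ν := by ring
    rw [e]
    exact (pos_iff_neg_of_mul_neg hneg).1 hp
  have hW : -ν * (A ν 0 * A (-ν) 0) < 0 := by
    have a : A ν 0 < 0 := by
      simp [A, hG]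
    have b : 0 < A (-ν) 0 := by
      simp [A]; exact Real.Gamma_pos_of_pos (by linarith)
    have := mul_neg_of_neg_of_pos a b
    nlinarith
  have hF : ∀ z : ℝ, 0 < z → z ≤ (k / 2) ^ 2 → S (A ν) z ≠ 0 := by
    intro z hz hzk h0
    have h := hzero (2 * Real.sqrt z) (by positivity) (by
      have : Real.sqrt z ≤ k / 2 := Real.sqrt_le_iff.2 ⟨by positivity, hzk⟩
      linarith)
    apply h
    rw [besselJ_eq _ _ (by positivity)]
    have : (2 * Real.sqrt z / 2) ^ 2 = z := by
      rw [mul_div_cancel_left₀ _ (by norm_num : (2:ℝ) ≠ 0), Real.sq_sqrt hz.le]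
    rw [this, h0, mul_zero]
  have hcF : Continuous (S (A ν)) :=
    continuous_iff_continuousAt.2 fun x => (S_hasDerivAt (A_ent i1) x).continuousAt
  have hs0 : 0 < s := hr.trans_le hrs
  set x := r * k / 2 with hx
  set y := s * k / 2 with hy
  have hx0 : 0 < x := by positivity
  have hy0 : 0 < y := by positivity
  have hxy : x ≤ y := by rw [hx, hy]; gcongr
  have hyk : y ≤ k / 2 := by rw [hy]; nlinarith
  have hxy2 : x ^ 2 ≤ y ^ 2 := by gcongr
  have hyk2 : y ^ 2 ≤ (k / 2) ^ 2 := by gcongr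
  -- antitone ratio
  have hdq : ∀ z : ℝ, 0 < z → z ≤ (k / 2) ^ 2 →
      HasDerivAt (fun z => z ^ (-ν) * S (A (-ν)) z / S (A ν) z)
        (z ^ (-ν - 1) * (-ν * (A ν 0 * A (-ν) 0)) / (S (A ν) z) ^ 2) z := by
    intro z hz hzk
    have p := Real.hasDerivAt_rpow_const (x := z) (p := -ν) (Or.inl hz.ne')
    have := (p.mul (S_hasDerivAt (A_ent i2) z)).div (S_hasDerivAt (A_ent i1) z) (hF z hz hzk)
    refine this.congr_deriv ?_
    rw [← wronsk i1 i2 z]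
    have e : z ^ (-ν) = z ^ (-ν - 1) * z := by
      rw [← Real.rpow_add_one hz.ne']; congr 1; ring
    simp only [Pi.mul_apply]
    rw [e]
    congr 1
    ring
  have hanti : AntitoneOn (fun z => z ^ (-ν) * S (A (-ν)) z / S (A ν) z)
      (Set.Icc (x ^ 2) (y ^ 2)) := by
    have hpos : ∀ z ∈ Set.Icc (x ^ 2) (y ^ 2), 0 < z ∧ z ≤ (k / 2) ^ 2 := fun z hz =>
      ⟨lt_of_lt_of_le (by positivity) hz.1, hz.2.trans hyk2⟩
    apply antitoneOn_of_deriv_nonpos (convex_Icc _ _)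
    · intro z hz
      exact (hdq z (hpos z hz).1 (hpos z hz).2).continuousAt.continuousWithinAt
    · intro z hz
      have hz := interior_subset hz
      exact (hdq z (hpos z hz).1 (hpos z hz).2).differentiableAt.differentiableWithinAt
    · intro z hz
      have hz := interior_subset hz
      rw [(hdq z (hpos z hz).1 (hpos z hz).2).deriv]
      apply div_nonpos_of_nonpos_of_nonneg _ (sq_nonneg _)
      exact mul_nonpos_of_nonneg_of_nonpos (Real.rpow_nonneg (hpos z hz).1.le _) hW.le
  have hle := hanti (Set.left_mem_Icc.2 hxy2) (Set.right_mem_Icc.2 hxy2) hxy2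
  simp only at hle
  have hFx := hF (x ^ 2) (by positivity) (hxy2.trans hyk2)
  have hFy := hF (y ^ 2) (by positivity) hyk2
  have hFF : 0 < S (A ν) (x ^ 2) * S (A ν) (y ^ 2) := by
    by_contra hcon
    have hcon : S (A ν) (x ^ 2) * S (A ν) (y ^ 2) ≤ 0 := not_lt.1 hcon
    have h0 : (0 : ℝ) ∈ Set.uIcc (S (A ν) (x ^ 2)) (S (A ν) (y ^ 2)) := by
      rw [Set.mem_uIcc]
      rcases mul_nonpos_iff.1 hcon with h | h
      · right; exact ⟨h.2, h.1⟩
      · left; exact ⟨h.1, h.2⟩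
    obtain ⟨z, hz, hz0⟩ := intermediate_value_uIcc hcF.continuousOn h0
    rw [Set.uIcc_of_le hxy2] at hz
    exact hF z (lt_of_lt_of_le (by positivity) hz.1) (hz.2.trans hyk2) hz0
  rw [besselJ_eq _ (s * k) (by positivity), besselJ_eq _ (r * k) (by positivity),
    besselJ_eq _ (s * k) (by positivity), besselJ_eq _ (r * k) (by positivity), ← hx, ← hy]
  have ex : ∀ t : ℝ, 0 < t → (t ^ 2) ^ (-ν) = t ^ (-ν) * t ^ (-ν) := by
    intro t ht
    rw [sq, Real.mul_rpow ht.le ht.le]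
  have en : ∀ t : ℝ, 0 < t → t ^ ν * t ^ (-ν) = 1 := by
    intro t ht
    rw [← Real.rpow_add ht]; simp
  rw [ex x hx0, ex y hy0] at hle
  apply mul_nonpos_of_nonneg_of_nonpos (Real.rpow_nonneg hr.le _)
  have e1 := en x hx0
  have e2 := en y hy0
  have px : 0 < x ^ ν := Real.rpow_pos_of_pos hx0 _
  have py : 0 < y ^ ν := Real.rpow_pos_of_pos hy0 _
  generalize x ^ ν = X at *
  generalize y ^ ν = Y at *
  generalize x ^ (-ν) = X' at *
  generalize y ^ (-ν) = Y' at *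
  generalize S (A ν) (x ^ 2) = Fx at *
  generalize S (A ν) (y ^ 2) = Fy at *
  generalize S (A (-ν)) (x ^ 2) = Gx at *
  generalize S (A (-ν)) (y ^ 2) = Gy at *
  have hm := mul_le_mul_of_nonneg_left hle (mul_pos (mul_pos px py) hFF).le
  have q1 : X * Y * (Fx * Fy) * (Y' * Y' * Gy / Fy) = Y' * Gy * (X * Fx) := by
    field_simp
    linear_combination (Y' * Gy) * e2
  have q2 : X * Y * (Fx * Fy) * (X' * X' * Gx / Fx) = Y * Fy * (X' * Gx) := by
    field_simp
    linear_combination (X' * Gx) * e1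
  rw [q1, q2] at hm
  linarith
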